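/- (Lemma 2, first direction: the arc-eager model contains the arc-hybrid model.) Fix n ≥ 1 and any arc-hybrid parameterization (g_sh, g_rr, g_rl). Define the arc-eager parameterization f_sh = g_sh, f_ra = g_sh, f_rl = g_rl, f_re = g_rr. Then for every complete arc-hybrid transition sequence t for a sentence of length n there exists a complete arc-eager transition sequence t' for the same sentence with A(t') = A(t) and F(t') = G(t). (The sequence t' is obtained from t by replacing each sh of a token that t later attaches via rr by ra, replacing each rr by re, and keeping all other transitions in order.) -/

import Mathlib

/-- A parser configuration: a stack of indices (head of the list = top of stack),
a buffer of indices (head of the list = front of buffer), and a set of arcs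
`(h, m)` meaning `h` is the head of modifier `m`. -/
structure Config where
  stack : List ℕ
  buffer : List ℕ
  arcs : Finset (ℕ × ℕ)

/-- Initial configuration for a sentence of length `n`:
empty stack, buffer `[0, 1, …, n]` (ROOT is index 0), empty arc set. -/
def initConfig (n : ℕ) : Config := ⟨[], List.range (n + 1), ∅⟩

/-- Stack-top feature of a configuration: `none` plays the role of the dummy index ⊥
used when the stack is empty. -/
def stackFeat (c : Config) : Option ℕ := c.stack.head?

/-- Buffer-front feature of a configuration: the end-marker index `n + 1`
when the buffer is empty. -/
def bufFeat (n : ℕ) (c : Config) : ℕ := c.buffer.headD (n + 1)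

/-- Arc-eager transition labels. -/
inductive ETrans
  | sh | rl | ra | re
deriving DecidableEq

/-- Single arc-eager transitions between configurations. -/
inductive EStep : Config → ETrans → Config → Prop
  | sh (σ b β A) : EStep ⟨σ, b :: β, A⟩ .sh ⟨b :: σ, β, A⟩
  | rl (s σ b β A) (h : ∀ x, (x, s) ∉ A) :
      EStep ⟨s :: σ, b :: β, A⟩ .rl ⟨σ, b :: β, insert (b, s) A⟩
  | ra (s σ b β A) :
      EStep ⟨s :: σ, b :: β, A⟩ .ra ⟨b :: s :: σ, β, insert (s, b) A⟩
  | re (s σ β A) (h : ∃ x, (x, s) ∈ A) :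
      EStep ⟨s :: σ, β, A⟩ .re ⟨σ, β, A⟩

/-- `ETrace c t c'` holds when `t` is a list of (configuration, transition) pairs,
each transition taken in the recorded configuration, leading from `c` to `c'`. -/
inductive ETrace : Config → List (Config × ETrans) → Config → Prop
  | nil (c) : ETrace c [] c
  | cons {c c' cf : Config} {τ : ETrans} {rest} :
      EStep c τ c' → ETrace c' rest cf → ETrace c ((c, τ) :: rest) cf

/-- Score of an arc-eager transition sequence under parameterization
`(fsh, fra, frl, fre)`: the sum, over the transitions, of the corresponding
scoring function evaluated at the feature pair of the configuration in which
the transition is taken. -/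
def escore (n : ℕ) (fsh fra frl fre : Option ℕ → ℕ → ℝ)
    (t : List (Config × ETrans)) : ℝ :=
  (t.map fun e =>
    (match e.2 with
      | ETrans.sh => fsh
      | ETrans.ra => fra
      | ETrans.rl => frl
      | ETrans.re => fre) (stackFeat e.1) (bufFeat n e.1)).sum

/-- Arc-hybrid transition labels. -/
inductive HTrans
  | sh | rr | rl
deriving DecidableEq

/-- Single arc-hybrid transitions between configurations. -/
inductive HStep : Config → HTrans → Config → Prop
  | sh (σ b β A) : HStep ⟨σ, b :: β, A⟩ .sh ⟨b :: σ, β, A⟩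
  | rr (s0 s1 σ β A) :
      HStep ⟨s0 :: s1 :: σ, β, A⟩ .rr ⟨s1 :: σ, β, insert (s1, s0) A⟩
  | rl (s σ b β A) :
      HStep ⟨s :: σ, b :: β, A⟩ .rl ⟨σ, b :: β, insert (b, s) A⟩

/-- `HTrace c t c'` holds when `t` is a list of (configuration, transition) pairs,
each transition taken in the recorded configuration, leading from `c` to `c'`. -/
inductive HTrace : Config → List (Config × HTrans) → Config → Prop
  | nil (c) : HTrace c [] c
  | cons {c c' cf : Config} {τ : HTrans} {rest} :
      HStep c τ c' → HTrace c' rest cf → HTrace c ((c, τ) :: rest) cf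

/-- Score of an arc-hybrid transition sequence under parameterization
`(gsh, grr, grl)`. -/
def hscore (n : ℕ) (gsh grr grl : Option ℕ → ℕ → ℝ)
    (t : List (Config × HTrans)) : ℝ :=
  (t.map fun e =>
    (match e.2 with
      | HTrans.sh => gsh
      | HTrans.rr => grr
      | HTrans.rl => grl) (stackFeat e.1) (bufFeat n e.1)).sum

/-!
A right-reduce attaches the stack top to the element below it, and the arc-eager system has to
commit to this arc already when the modifier is pushed. Read the arc-hybrid sequence backwards: the
arcs added too early at any moment form a set `P` of arcs between adjacent stack elements, each
pointing from the lower one to the upper one. Undoing a right-reduce puts its arc into `P`, and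
undoing a shift takes the arc onto the shifted token out of `P` (then the shift becomes a
right-attach) or leaves `P` alone (then it stays a shift). Stack and buffer, hence the features,
agree throughout. A left-reduce stays legal because the arcs of `P` inside the remaining stack do
not point to the popped token, tokens being distinct.
-/

/-- The arcs joining neighbouring elements of a stack, each directed from the lower to the upper
one. These are the arcs that an arc-eager parser may hold while its arc-hybrid counterpart has not
yet added them. -/
def stackArcs (σ : List ℕ) : Finset (ℕ × ℕ) := (σ.tail.zip σ).toFinset

@[simp]
theorem stackArcs_nil : stackArcs [] = ∅ := rfl

@[simp]
theorem stackArcs_cons_cons (s₀ s₁ : ℕ) (σ : List ℕ) :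
    stackArcs (s₀ :: s₁ :: σ) = insert (s₁, s₀) (stackArcs (s₁ :: σ)) := by
  simp [stackArcs]

theorem stackArcs_subset_cons (s : ℕ) (σ : List ℕ) : stackArcs σ ⊆ stackArcs (s :: σ) := by
  cases σ <;> simp

theorem mem_of_mem_stackArcs {h m : ℕ} {σ : List ℕ} (harc : (h, m) ∈ stackArcs σ) : m ∈ σ :=
  (List.of_mem_zip (List.mem_toFinset.1 harc)).2

namespace Config

/-- The configuration `c` with the arcs in `P` added. -/
def addArcs (c : Config) (P : Finset (ℕ × ℕ)) : Config := ⟨c.stack, c.buffer, c.arcs ∪ P⟩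

@[simp]
theorem addArcs_empty (c : Config) : c.addArcs ∅ = c := by
  simp [addArcs]

/-- The invariant of arc-hybrid parsing: the tokens on the stack and in the buffer are distinct and
none of them has a head yet. -/
structure WellFormed (c : Config) : Prop where
  nodup : (c.stack ++ c.buffer).Nodup
  headless : ∀ m ∈ c.stack ++ c.buffer, ∀ h, (h, m) ∉ c.arcs

theorem WellFormed.shift {b : ℕ} {σ β : List ℕ} {A : Finset (ℕ × ℕ)}
    (hc : WellFormed ⟨σ, b :: β, A⟩) : WellFormed ⟨b :: σ, β, A⟩ where
  nodup := List.perm_middle.nodup_iff.1 hc.nodup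
  headless m hm := hc.headless m (List.perm_middle.mem_iff.2 hm)

theorem WellFormed.attach_top {s : ℕ} {σ β : List ℕ} {A : Finset (ℕ × ℕ)}
    (hc : WellFormed ⟨s :: σ, β, A⟩) (h : ℕ) : WellFormed ⟨σ, β, insert (h, s) A⟩ where
  nodup := hc.nodup.of_cons
  headless m hm h' harc := by
    have hms : m ≠ s := ne_of_mem_of_not_mem hm (List.nodup_cons.1 hc.nodup).1
    have harcA : (h', m) ∈ A := Finset.mem_of_mem_insert_of_ne harc (by simp [hms])
    exact hc.headless m (List.mem_cons_of_mem s hm) h' harcA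

end Config

theorem HStep.wellFormed {c c' : Config} {τ : HTrans} (hstep : HStep c τ c')
    (hc : c.WellFormed) : c'.WellFormed := by
  cases hstep with
  | sh => exact hc.shift
  | rr | rl => exact hc.attach_top _

/-- `Simulates e e'` relates an arc-hybrid move to an arc-eager move that may replace it: both are
taken at the same stack and buffer, a shift may become a right-attach, and a right-reduce becomes a
reduce. The arc sets of the two configurations are unrelated, since features do not see them. -/
inductive Simulates : Config × HTrans → Config × ETrans → Prop
  | sh_sh (σ β A B) : Simulates (⟨σ, β, A⟩, .sh) (⟨σ, β, B⟩, .sh)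
  | sh_ra (σ β A B) : Simulates (⟨σ, β, A⟩, .sh) (⟨σ, β, B⟩, .ra)
  | rr_re (σ β A B) : Simulates (⟨σ, β, A⟩, .rr) (⟨σ, β, B⟩, .re)
  | rl_rl (σ β A B) : Simulates (⟨σ, β, A⟩, .rl) (⟨σ, β, B⟩, .rl)

theorem escore_eq_hscore_of_simulates (n : ℕ) (gsh grr grl : Option ℕ → ℕ → ℝ)
    {t : List (Config × HTrans)} {t' : List (Config × ETrans)}
    (hsim : List.Forall₂ Simulates t t') :
    escore n gsh gsh grl grr t' = hscore n gsh grr grl t := by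
  unfold escore hscore
  congr 1
  induction hsim with
  | nil => rfl
  | cons hmove _ ih => cases hmove <;> exact congrArg₂ List.cons rfl ih

theorem exists_eStep_of_shift (b : ℕ) (σ β : List ℕ) (A : Finset (ℕ × ℕ)) {P : Finset (ℕ × ℕ)}
    (hP : P ⊆ stackArcs (b :: σ)) :
    ∃ Q ⊆ stackArcs σ, ∃ τ,
      EStep (Config.addArcs ⟨σ, b :: β, A⟩ Q) τ (Config.addArcs ⟨b :: σ, β, A⟩ P) ∧
      Simulates (⟨σ, b :: β, A⟩, .sh) (Config.addArcs ⟨σ, b :: β, A⟩ Q, τ) := by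
  by_cases hPσ : P ⊆ stackArcs σ
  · exact ⟨P, hPσ, .sh, .sh .., .sh_sh ..⟩
  cases σ with
  | nil => exact absurd hP hPσ
  | cons s σ =>
    rw [stackArcs_cons_cons] at hP
    have harc : (s, b) ∈ P := by
      by_contra hnot
      exact hPσ ((Finset.subset_insert_iff_of_notMem hnot).1 hP)
    refine ⟨P.erase (s, b), Finset.subset_insert_iff.1 hP, .ra, ?_, .sh_ra ..⟩
    have harcs : A ∪ P = insert (s, b) (A ∪ P.erase (s, b)) := by
      rw [← Finset.union_insert, Finset.insert_erase harc]
    simpa only [Config.addArcs, harcs] using EStep.ra s σ b β (A ∪ P.erase (s, b))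

theorem exists_eStep_of_rightReduce (s₀ s₁ : ℕ) (σ β : List ℕ) (A : Finset (ℕ × ℕ))
    {P : Finset (ℕ × ℕ)} (hP : P ⊆ stackArcs (s₁ :: σ)) :
    ∃ Q ⊆ stackArcs (s₀ :: s₁ :: σ),
      EStep (Config.addArcs ⟨s₀ :: s₁ :: σ, β, A⟩ Q) .re
        (Config.addArcs ⟨s₁ :: σ, β, insert (s₁, s₀) A⟩ P) := by
  refine ⟨insert (s₁, s₀) P, ?_, ?_⟩
  · rw [stackArcs_cons_cons]
    exact Finset.insert_subset_insert _ hP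
  · rw [Config.addArcs, Config.addArcs, Finset.union_insert, Finset.insert_union]
    exact .re _ _ _ _ ⟨s₁, Finset.mem_insert_self ..⟩

theorem eStep_leftReduce {s b : ℕ} {σ β : List ℕ} {A P : Finset (ℕ × ℕ)}
    (hc : Config.WellFormed ⟨s :: σ, b :: β, A⟩) (hP : P ⊆ stackArcs σ) :
    EStep (Config.addArcs ⟨s :: σ, b :: β, A⟩ P) .rl
      (Config.addArcs ⟨σ, b :: β, insert (b, s) A⟩ P) := by
  rw [Config.addArcs, Config.addArcs, Finset.insert_union]
  refine .rl _ _ _ _ _ fun h harc ↦ ?_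
  rcases Finset.mem_union.1 harc with harcA | harcP
  · exact hc.headless s List.mem_cons_self h harcA
  · have hs : s ∈ σ := mem_of_mem_stackArcs (hP harcP)
    exact (List.nodup_cons.1 hc.nodup).1 (List.mem_append_left _ hs)

theorem HStep.exists_eStep {c c' : Config} {τ : HTrans} {P : Finset (ℕ × ℕ)}
    (hstep : HStep c τ c') (hc : c.WellFormed) (hP : P ⊆ stackArcs c'.stack) :
    ∃ Q ⊆ stackArcs c.stack, ∃ τ',
      EStep (c.addArcs Q) τ' (c'.addArcs P) ∧ Simulates (c, τ) (c.addArcs Q, τ') := by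
  cases hstep with
  | sh σ b β A => exact exists_eStep_of_shift b σ β A hP
  | rr s₀ s₁ σ β A =>
    obtain ⟨Q, hQ, hestep⟩ := exists_eStep_of_rightReduce s₀ s₁ σ β A hP
    exact ⟨Q, hQ, .re, hestep, .rr_re ..⟩
  | rl s σ b β A =>
    exact ⟨P, hP.trans (stackArcs_subset_cons s σ), .rl, eStep_leftReduce hc hP, .rl_rl ..⟩

theorem HTrace.exists_eTrace {c c' : Config} {t : List (Config × HTrans)}
    (ht : HTrace c t c') (hc : c.WellFormed) :
    ∃ P ⊆ stackArcs c.stack, ∃ t',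
      ETrace (c.addArcs P) t' c' ∧ List.Forall₂ Simulates t t' := by
  induction ht with
  | nil c =>
    refine ⟨∅, Finset.empty_subset _, [], ?_, .nil⟩
    rw [Config.addArcs_empty]
    exact .nil c
  | cons hstep _ ih =>
    obtain ⟨P, hP, t', ht', hsim⟩ := ih (hstep.wellFormed hc)
    obtain ⟨Q, hQ, τ', hestep, hmove⟩ := hstep.exists_eStep hc hP
    exact ⟨Q, hQ, _, .cons hestep ht', .cons hmove hsim⟩

theorem arc_eager_contains_arc_hybrid_general {β : List ℕ} (hβ : β.Nodup) {c : Config}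
    {t : List (Config × HTrans)} (ht : HTrace ⟨[], β, ∅⟩ t c) :
    ∃ t', ETrace ⟨[], β, ∅⟩ t' c ∧ List.Forall₂ Simulates t t' := by
  obtain ⟨P, hP, t', ht', hsim⟩ := ht.exists_eTrace ⟨hβ, fun _ _ _ ↦ Finset.notMem_empty _⟩
  obtain rfl : P = ∅ := by simpa only [stackArcs_nil, Finset.subset_empty] using hP
  rw [Config.addArcs_empty] at ht'
  exact ⟨t', ht', hsim⟩

/-- **Lemma 2, first direction (arc-eager contains arc-hybrid).**
Fix `n ≥ 1` and an arc-hybrid parameterization `(gsh, grr, grl)`, and endow the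
arc-eager system with `fsh = gsh`, `fra = gsh`, `frl = grl`, `fre = grr`.
Then for every complete arc-hybrid transition sequence `t` for a sentence of
length `n` there is a complete arc-eager transition sequence `t'` producing
the same arc set and with `F(t') = G(t)`. -/
theorem arc_eager_contains_arc_hybrid
    (n : ℕ) (hn : 1 ≤ n)
    (gsh grr grl : Option ℕ → ℕ → ℝ)
    (t : List (Config × HTrans)) (A : Finset (ℕ × ℕ))
    (ht : HTrace (initConfig n) t ⟨[0], [], A⟩) :
    ∃ t' : List (Config × ETrans),
      ETrace (initConfig n) t' ⟨[0], [], A⟩ ∧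
      escore n gsh gsh grl grr t' = hscore n gsh grr grl t := by
  obtain ⟨t', ht', hsim⟩ := arc_eager_contains_arc_hybrid_general List.nodup_range ht
  exact ⟨t', ht', escore_eq_hscore_of_simulates n gsh grr grl hsim⟩
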